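/- arXiv:2406.00982 — 4 statements merged into one kernel-verified Lean document; each statement's English description precedes it below -/
import Mathlib

section
/- Let U, V ⊆ ℝⁿ be open sets, let φ : U → V be a diffeomorphism, and let Tφ : U × ℝⁿ → V × ℝⁿ denote the tangent lift Tφ(x,v) := (φ(x), Dφ(x)·v), which is a diffeomorphism onto its image. If R_d is a discretization map on U, then the map R_{d,φ} := (φ × φ) ∘ R_d ∘ (Tφ)⁻¹, defined on the image under Tφ of the domain of R_d, is a discretization map on V. -/
/-- A discretization map on an open set `U ⊆ ℝⁿ`. -/
def IsDiscretizationMap {n : ℕ} (U : Set (Fin n → ℝ))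
    (O : Set ((Fin n → ℝ) × (Fin n → ℝ)))
    (Rd : ((Fin n → ℝ) × (Fin n → ℝ)) → ((Fin n → ℝ) × (Fin n → ℝ))) : Prop :=
  IsOpen O ∧ O ⊆ U ×ˢ (Set.univ : Set (Fin n → ℝ)) ∧
  (∀ x ∈ U, ((x, (0 : Fin n → ℝ))) ∈ O) ∧
  ContDiffOn ℝ (⊤ : ℕ∞) Rd O ∧
  (∀ p ∈ O, (Rd p).1 ∈ U ∧ (Rd p).2 ∈ U) ∧
  (∀ x ∈ U, Rd (x, 0) = (x, x)) ∧
  (∀ x ∈ U,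
    fderiv ℝ (fun v => (Rd (x, v)).2) 0 - fderiv ℝ (fun v => (Rd (x, v)).1) 0
      = ContinuousLinearMap.id ℝ (Fin n → ℝ))

/-- The tangent lift `Tφ(x,v) := (φ(x), Dφ(x)·v)` of a map `φ`. -/
noncomputable def tangentLift {n : ℕ} (φ : (Fin n → ℝ) → (Fin n → ℝ)) :
    ((Fin n → ℝ) × (Fin n → ℝ)) → ((Fin n → ℝ) × (Fin n → ℝ)) :=
  fun p => (φ p.1, fderiv ℝ φ p.1 p.2)

/-! The tangent lift is functorial, so `Tψ` inverts `Tφ` and the image `Tφ(O)` is the preimage of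
`O` under the continuous map `Tψ`; this makes the new domain open and the new map a composition of
smooth maps. Since `Tψ(y, 0) = (ψ y, 0)`, condition (i) is inherited. For condition (ii), both
components of `Rd` send `(ψ y, 0)` to the same point `ψ y`, so the chain rule gives them a common
outer factor `Dφ(ψ y)` and the difference of fibre derivatives is `Dφ(ψ y) ∘ id ∘ Dψ(y) = id`. -/

open Set
open scoped Topology

section FDeriv

variable {𝕜 E F G H : Type*} [NontriviallyNormedField 𝕜]
  [NormedAddCommGroup E] [NormedSpace 𝕜 E] [NormedAddCommGroup F] [NormedSpace 𝕜 F]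
  [NormedAddCommGroup G] [NormedSpace 𝕜 G] [NormedAddCommGroup H] [NormedSpace 𝕜 H]

lemma fderiv_comp_fderiv_eq_id_of_eventually_leftInverse {f : E → F} {g : F → E} {x : E}
    (hg : DifferentiableAt 𝕜 g (f x)) (hf : DifferentiableAt 𝕜 f x)
    (hgf : g ∘ f =ᶠ[𝓝 x] id) :
    (fderiv 𝕜 g (f x)).comp (fderiv 𝕜 f x) = ContinuousLinearMap.id 𝕜 E := by
  rw [← fderiv_comp x hg hf, hgf.fderiv_eq, fderiv_id]

lemma fderiv_comp_comp_clm {φ : G → H} {g : F → G} {A : E →L[𝕜] F} {v : E} {w : F} {z : G}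
    (hφ : DifferentiableAt 𝕜 φ z) (hg : DifferentiableAt 𝕜 g w) (hA : A v = w) (hgz : g w = z) :
    fderiv 𝕜 (fun u ↦ φ (g (A u))) v =
      (fderiv 𝕜 φ z).comp ((fderiv 𝕜 g w).comp A) := by
  subst hA hgz
  exact (hφ.hasFDerivAt.comp v (hg.hasFDerivAt.comp v A.hasFDerivAt)).fderiv

lemma fderiv_comp_comp_clm_sub {φ : G → H} {g₁ g₂ : F → G} {A : E →L[𝕜] F} {v : E} {w : F}
    {z : G} (hφ : DifferentiableAt 𝕜 φ z) (hg₁ : DifferentiableAt 𝕜 g₁ w)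
    (hg₂ : DifferentiableAt 𝕜 g₂ w) (hA : A v = w) (hg₁z : g₁ w = z) (hg₂z : g₂ w = z) :
    fderiv 𝕜 (fun u ↦ φ (g₁ (A u))) v - fderiv 𝕜 (fun u ↦ φ (g₂ (A u))) v =
      (fderiv 𝕜 φ z).comp ((fderiv 𝕜 g₁ w - fderiv 𝕜 g₂ w).comp A) := by
  rw [fderiv_comp_comp_clm hφ hg₁ hA hg₁z, fderiv_comp_comp_clm hφ hg₂ hA hg₂z,
    ContinuousLinearMap.sub_comp, ContinuousLinearMap.comp_sub]

end FDeriv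

section TangentLift

variable {n : ℕ} {U V : Set (Fin n → ℝ)} {φ ψ : (Fin n → ℝ) → (Fin n → ℝ)}

lemma tangentLift_zero (φ : (Fin n → ℝ) → (Fin n → ℝ)) (x : Fin n → ℝ) :
    tangentLift φ (x, 0) = (φ x, 0) :=
  Prod.ext rfl (map_zero _)

lemma mapsTo_tangentLift (hφ : MapsTo φ U V) :
    MapsTo (tangentLift φ) (U ×ˢ univ) (V ×ˢ univ) :=
  fun _ hp ↦ ⟨hφ hp.1, mem_univ _⟩

lemma leftInvOn_tangentLift (hU : IsOpen U) (hV : IsOpen V) (hφ : DifferentiableOn ℝ φ U)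
    (hψ : DifferentiableOn ℝ ψ V) (hφUV : MapsTo φ U V) (hψφ : LeftInvOn ψ φ U) :
    LeftInvOn (tangentLift ψ) (tangentLift φ) (U ×ˢ univ) := by
  rintro ⟨x, v⟩ ⟨hx, -⟩
  have hD : (fderiv ℝ ψ (φ x)).comp (fderiv ℝ φ x) = ContinuousLinearMap.id ℝ _ :=
    fderiv_comp_fderiv_eq_id_of_eventually_leftInverse
      (hψ.differentiableAt (hV.mem_nhds (hφUV hx))) (hφ.differentiableAt (hU.mem_nhds hx))
      (hψφ.eqOn.eventuallyEq_of_mem (hU.mem_nhds hx))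
  exact Prod.ext (hψφ hx) (DFunLike.congr_fun hD v)

lemma image_tangentLift (hU : IsOpen U) (hV : IsOpen V) (hφ : DifferentiableOn ℝ φ U)
    (hψ : DifferentiableOn ℝ ψ V) (hφUV : MapsTo φ U V) (hψVU : MapsTo ψ V U)
    (hinv : InvOn ψ φ U V) {O : Set ((Fin n → ℝ) × (Fin n → ℝ))} (hO : O ⊆ U ×ˢ univ) :
    tangentLift φ '' O = V ×ˢ univ ∩ tangentLift ψ ⁻¹' O :=
  let e : PartialEquiv ((Fin n → ℝ) × (Fin n → ℝ)) ((Fin n → ℝ) × (Fin n → ℝ)) :=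
    { toFun := tangentLift φ
      invFun := tangentLift ψ
      source := U ×ˢ univ
      target := V ×ˢ univ
      map_source' := mapsTo_tangentLift hφUV
      map_target' := mapsTo_tangentLift hψVU
      left_inv' := leftInvOn_tangentLift hU hV hφ hψ hφUV hinv.1
      right_inv' := leftInvOn_tangentLift hV hU hψ hφ hψVU hinv.2 }
  e.image_eq_target_inter_inv_preimage hO

lemma contDiffOn_tangentLift {k m : WithTop ℕ∞} (hU : IsOpen U) (hφ : ContDiffOn ℝ k φ U)
    (hmk : m + 1 ≤ k) : ContDiffOn ℝ m (tangentLift φ) (U ×ˢ univ) := by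
  have hfst : MapsTo Prod.fst (U ×ˢ (univ : Set (Fin n → ℝ))) U := fun _ hp ↦ hp.1
  have hφ' : ContDiffOn ℝ m φ U := hφ.of_le (le_self_add.trans hmk)
  have hDφ : ContDiffOn ℝ m (fderiv ℝ φ) U := hφ.fderiv_of_isOpen hU hmk
  exact (hφ'.comp contDiffOn_fst hfst).prodMk
    ((hDφ.comp contDiffOn_fst hfst).clm_apply contDiffOn_snd)

end TangentLift

namespace IsDiscretizationMap

variable {n : ℕ} {U : Set (Fin n → ℝ)} {O : Set ((Fin n → ℝ) × (Fin n → ℝ))}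
  {Rd : (Fin n → ℝ) × (Fin n → ℝ) → (Fin n → ℝ) × (Fin n → ℝ)}
  {φ ψ : (Fin n → ℝ) → (Fin n → ℝ)}

lemma differentiableAt_fiber (hRd : IsDiscretizationMap U O Rd) {x : Fin n → ℝ} (hx : x ∈ U) :
    DifferentiableAt ℝ (fun v ↦ Rd (x, v)) 0 := by
  obtain ⟨hO, -, hzero, hsmooth, -⟩ := hRd
  have hRd_zero : DifferentiableAt ℝ Rd (x, 0) :=
    (hsmooth.contDiffAt (hO.mem_nhds (hzero x hx))).differentiableAt (by simp)
  exact hRd_zero.comp 0 (by fun_prop)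

lemma fderiv_lift_sub (hRd : IsDiscretizationMap U O Rd) {y : Fin n → ℝ} (hy : ψ y ∈ U)
    (hφ : DifferentiableAt ℝ φ (ψ y)) :
    fderiv ℝ (fun v ↦ φ (Rd (tangentLift ψ (y, v))).2) 0 -
        fderiv ℝ (fun v ↦ φ (Rd (tangentLift ψ (y, v))).1) 0 =
      (fderiv ℝ φ (ψ y)).comp (fderiv ℝ ψ y) := by
  have hdiff := hRd.differentiableAt_fiber hy
  obtain ⟨-, -, -, -, -, hdiag, hid⟩ := hRd
  have hbase : Rd (ψ y, 0) = (ψ y, ψ y) := hdiag _ hy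
  have hsub := fderiv_comp_comp_clm_sub hφ hdiff.snd hdiff.fst
    (map_zero (fderiv ℝ ψ y)) (by rw [hbase]) (by rw [hbase])
  rwa [hid _ hy, ContinuousLinearMap.id_comp] at hsub

lemma contDiffOn_lift (hRd : IsDiscretizationMap U O Rd)
    {W : Set ((Fin n → ℝ) × (Fin n → ℝ))} (hφ : ContDiffOn ℝ (⊤ : ℕ∞) φ U)
    (hψ : ContDiffOn ℝ (⊤ : ℕ∞) (tangentLift ψ) W) (hW : MapsTo (tangentLift ψ) W O) :
    ContDiffOn ℝ (⊤ : ℕ∞)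
      (fun p ↦ (φ (Rd (tangentLift ψ p)).1, φ (Rd (tangentLift ψ p)).2)) W := by
  obtain ⟨-, -, -, hsmooth, hmaps, -⟩ := hRd
  have hcomp : ContDiffOn ℝ (⊤ : ℕ∞) (fun p ↦ Rd (tangentLift ψ p)) W := hsmooth.comp hψ hW
  exact (hφ.comp hcomp.fst fun _ hp ↦ (hmaps _ (hW hp)).1).prodMk
    (hφ.comp hcomp.snd fun _ hp ↦ (hmaps _ (hW hp)).2)

end IsDiscretizationMap

/-- Lift of discretization maps: if `φ : U → V` is a diffeomorphism (with smooth inverse `ψ`)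
and `Rd` is a discretization map on `U`, then `R_{d,φ} := (φ × φ) ∘ Rd ∘ (Tφ)⁻¹`, defined on the
image under `Tφ` of the domain of `Rd`, is a discretization map on `V`.  Here `(Tφ)⁻¹` is the
tangent lift `Tψ` of the inverse `ψ` of `φ`. -/
theorem lift_of_discretization_map {n : ℕ}
    (U V : Set (Fin n → ℝ)) (hU : IsOpen U) (hV : IsOpen V)
    (φ ψ : (Fin n → ℝ) → (Fin n → ℝ))
    (hφsmooth : ContDiffOn ℝ (⊤ : ℕ∞) φ U)
    (hψsmooth : ContDiffOn ℝ (⊤ : ℕ∞) ψ V)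
    (hφmaps : φ '' U = V)
    (hψφ : ∀ x ∈ U, ψ (φ x) = x)
    (hφψ : ∀ y ∈ V, φ (ψ y) = y)
    (O : Set ((Fin n → ℝ) × (Fin n → ℝ)))
    (Rd : ((Fin n → ℝ) × (Fin n → ℝ)) → ((Fin n → ℝ) × (Fin n → ℝ)))
    (hRd : IsDiscretizationMap U O Rd) :
    IsDiscretizationMap V (tangentLift φ '' O)
      (fun p => ((φ (Rd (tangentLift ψ p)).1, φ (Rd (tangentLift ψ p)).2))) := by
  have hφUV : MapsTo φ U V := hφmaps ▸ mapsTo_image φ U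
  have hψVU : MapsTo ψ V U := LeftInvOn.mapsTo hψφ hφmaps.ge
  have hφd : DifferentiableOn ℝ φ U := hφsmooth.differentiableOn (by simp)
  have hψd : DifferentiableOn ℝ ψ V := hψsmooth.differentiableOn (by simp)
  have hTψ : ContDiffOn ℝ (⊤ : ℕ∞) (tangentLift ψ) (V ×ˢ univ) :=
    contDiffOn_tangentLift hV hψsmooth (by simp)
  have ⟨hO, hOU, hzero, _, hmaps, hdiag, _⟩ := hRd
  rw [image_tangentLift hU hV hφd hψd hφUV hψVU ⟨hψφ, hφψ⟩ hOU]
  refine ⟨hTψ.continuousOn.isOpen_inter_preimage (hV.prod isOpen_univ) hO, inter_subset_left,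
    fun y hy ↦ ⟨⟨hy, mem_univ _⟩, ?_⟩, ?_, fun p hp ↦ ?_, fun y hy ↦ ?_, fun y hy ↦ ?_⟩
  · simpa only [mem_preimage, tangentLift_zero] using hzero _ (hψVU hy)
  · exact hRd.contDiffOn_lift hφsmooth (hTψ.mono inter_subset_left) fun _ hp ↦ hp.2
  · exact ⟨hφUV (hmaps _ hp.2).1, hφUV (hmaps _ hp.2).2⟩
  · simp only [tangentLift_zero, hdiag _ (hψVU hy), hφψ y hy]
  · have hφy := hφd.differentiableAt (hU.mem_nhds (hψVU hy))
    have hψy := hψd.differentiableAt (hV.mem_nhds hy)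
    rw [hRd.fderiv_lift_sub (hψVU hy) hφy]
    exact fderiv_comp_fderiv_eq_id_of_eventually_leftInverse hφy hψy
      (Filter.eventually_of_mem (hV.mem_nhds hy) hφψ)
end

section
/- Let U ⊆ ℝⁿ be open, let R_d be a C² discretization map on U which is a diffeomorphism from its domain onto an open neighborhood of the diagonal of U × U, and let F : U × ℝᵐ → ℝⁿ be C¹. Fix u ∈ ℝᵐ, x₀ ∈ U, and let t ↦ x(t) be the solution of ẋ = F(x,u) with x(0) = x₀. For h > 0, call x₁ an output of the induced scheme at x₀ if R_d⁻¹(x₀, x₁) = h·F(y, u) in the fiber over y, where y is the first component (base point) of R_d⁻¹(x₀, x₁); that is, there exists y ∈ U with R_d(y, h·F(y,u)) = (x₀, x₁). Then the scheme is first-order accurate: there exist constants K > 0 and h₀ > 0 such that for every 0 < h < h₀ there exists an output x₁ of the scheme at x₀ satisfying ‖x(h) − x₁‖ ≤ K·h². -/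
/-!
The scheme solves `Rd¹(y, h F(y, u)) = x₀` for the base point `y` and returns
`x₁ = Rd²(y, h F(y, u))`. Since `Rd¹(y, 0) = y`, the implicit function theorem gives a solution
`y(h)`, differentiable at `h = 0`, with `y(0) = x₀`.

The difference `D = Rd² - Rd¹` vanishes on the zero section and `∂ᵥD(x₀, 0) = id`. As `D` is twice
differentiable, the mean value inequality gives `D(y, v) = v + O((‖y - x₀‖ + ‖v‖) ‖v‖)`, and with
`y(h) - x₀` and `v = h F(y(h), u)` both `O(h)` this reads
`x₁ - x₀ = h F(y(h), u) + O(h²) = h F(x₀, u) + O(h²)`.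
The same mean value estimate gives `x(h) - x₀ = h F(x₀, u) + O(h²)`, because the derivative
`F(x(t), u)` of the solution varies by `O(t)`.
-/

/-- A `C²` discretization map on an open set `U ⊆ ℝⁿ`. -/
def IsC2DiscretizationMap {n : ℕ} (U : Set (Fin n → ℝ))
    (O : Set ((Fin n → ℝ) × (Fin n → ℝ)))
    (Rd : ((Fin n → ℝ) × (Fin n → ℝ)) → ((Fin n → ℝ) × (Fin n → ℝ))) : Prop :=
  IsOpen O ∧ O ⊆ U ×ˢ (Set.univ : Set (Fin n → ℝ)) ∧
  (∀ x ∈ U, ((x, (0 : Fin n → ℝ))) ∈ O) ∧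
  ContDiffOn ℝ 2 Rd O ∧
  (∀ p ∈ O, (Rd p).1 ∈ U ∧ (Rd p).2 ∈ U) ∧
  (∀ x ∈ U, Rd (x, 0) = (x, x)) ∧
  (∀ x ∈ U,
    fderiv ℝ (fun v => (Rd (x, v)).2) 0 - fderiv ℝ (fun v => (Rd (x, v)).1) 0
      = ContinuousLinearMap.id ℝ (Fin n → ℝ))

open Filter Asymptotics
open scoped Topology

section Calculus

variable {E F G : Type*} [NormedAddCommGroup E] [NormedSpace ℝ E]
  [NormedAddCommGroup F] [NormedSpace ℝ F] [NormedAddCommGroup G] [NormedSpace ℝ G]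

lemma isBigO_sub_sub_of_isBigO_hasFDerivAt {g : E → F} {g' : E → E →L[ℝ] F} {a : E}
    (hg : ∀ᶠ p in 𝓝 a, HasFDerivAt g (g' p) p)
    (hg' : (fun p => g' p - g' a) =O[𝓝 a] fun p => p - a) :
    (fun p : E × E => g p.1 - g p.2 - g' a (p.1 - p.2)) =O[𝓝 (a, a)]
      fun p => ‖p - (a, a)‖ * ‖p.1 - p.2‖ := by
  obtain ⟨C, hC, hbound⟩ := hg'.exists_pos
  obtain ⟨r, hr, hball⟩ := Metric.eventually_nhds_iff_ball.1 (hg.and hbound.bound)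
  refine IsBigO.of_bound C ?_
  filter_upwards [Metric.ball_mem_nhds (a, a) hr] with p hp
  have hsub : Metric.closedBall a ‖p - (a, a)‖ ⊆ Metric.ball a r :=
    Metric.closedBall_subset_ball (by rwa [← dist_eq_norm])
  have hfst : p.1 ∈ Metric.closedBall a ‖p - (a, a)‖ :=
    mem_closedBall_iff_norm.2 (norm_fst_le (p - (a, a)))
  have hsnd : p.2 ∈ Metric.closedBall a ‖p - (a, a)‖ :=
    mem_closedBall_iff_norm.2 (norm_snd_le (p - (a, a)))
  have hderiv_le : ∀ q ∈ Metric.closedBall a ‖p - (a, a)‖, ‖g' q - g' a‖ ≤ C * ‖p - (a, a)‖ :=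
    fun q hq => (hball q (hsub hq)).2.trans <| by gcongr; exact mem_closedBall_iff_norm.1 hq
  have hmvt := (convex_closedBall a ‖p - (a, a)‖).norm_image_sub_le_of_norm_hasFDerivWithin_le'
    (fun q hq => (hball q (hsub hq)).1.hasFDerivWithinAt) hderiv_le hsnd hfst
  simpa [mul_assoc] using hmvt

lemma isBigO_sub_sub_fderiv_of_contDiffAt_two {g : E → F} {a : E} (hg : ContDiffAt ℝ 2 g a) :
    (fun p : E × E => g p.1 - g p.2 - fderiv ℝ g a (p.1 - p.2)) =O[𝓝 (a, a)]
      fun p => ‖p - (a, a)‖ * ‖p.1 - p.2‖ := by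
  have hfderiv : ContDiffAt ℝ 1 (fderiv ℝ g) a := hg.fderiv_right (by norm_num)
  refine isBigO_sub_sub_of_isBigO_hasFDerivAt ?_ (hfderiv.differentiableAt one_ne_zero).isBigO_sub
  filter_upwards [hg.eventually (by simp)] with p hp
  exact (hp.differentiableAt two_ne_zero).hasFDerivAt

lemma isBigO_sub_sub_fderiv_inr_of_contDiffAt_two {D : E × F → G} {a : E × F}
    (hD : ContDiffAt ℝ 2 D a) :
    (fun p : E × F => D p - D (p.1, a.2) - fderiv ℝ D a (0, p.2 - a.2)) =O[𝓝 a]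
      fun p => ‖p - a‖ * ‖p.2 - a.2‖ := by
  have htendsto : Tendsto (fun p : E × F => (p, (p.1, a.2))) (𝓝 a) (𝓝 (a, a)) :=
    (show Continuous fun p : E × F => (p, (p.1, a.2)) by fun_prop).tendsto' _ _ rfl
  have hcomp := (isBigO_sub_sub_fderiv_of_contDiffAt_two hD).comp_tendsto htendsto
  refine (hcomp.congr_left fun p => ?_).trans (IsBigO.of_norm_le fun p => ?_)
  · simp [Prod.sub_def]
  · simp [Prod.norm_def, Prod.sub_def, abs_of_nonneg]

lemma isBigO_sub_sub_smul_of_hasDerivAt {f : E → E} {x : ℝ → E} {t₀ : ℝ}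
    (hf : DifferentiableAt ℝ f (x t₀)) (hx : ∀ᶠ t in 𝓝 t₀, HasDerivAt x (f (x t)) t) :
    (fun t => x t - x t₀ - (t - t₀) • f (x t₀)) =O[𝓝 t₀] fun t => (t - t₀) ^ 2 := by
  have hx₀ : HasDerivAt x (f (x t₀)) t₀ := hx.self_of_nhds
  have hfx : (fun t => f (x t) - f (x t₀)) =O[𝓝 t₀] fun t => t - t₀ :=
    (hf.isBigO_sub.comp_tendsto hx₀.continuousAt).trans hx₀.differentiableAt.isBigO_sub
  have hderiv : (fun t => ContinuousLinearMap.toSpanSingletonLIE ℝ E (f (x t)) -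
      ContinuousLinearMap.toSpanSingletonLIE ℝ E (f (x t₀))) =O[𝓝 t₀] fun t => t - t₀ :=
    (IsBigO.of_norm_le fun t => by rw [← map_sub, LinearIsometryEquiv.norm_map]).trans hfx.norm_left
  have htendsto : Tendsto (fun t : ℝ => (t, t₀)) (𝓝 t₀) (𝓝 (t₀, t₀)) :=
    (Continuous.prodMk_left t₀).tendsto t₀
  have hcomp := (isBigO_sub_sub_of_isBigO_hasFDerivAt
    (hx.mono fun t ht => ht.hasFDerivAt) hderiv).comp_tendsto htendsto
  simpa [Function.comp_def, pow_two] using hcomp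

lemma differentiableAt_prodMk_smul_comp {f : E → F} {y : ℝ → E} {t₀ : ℝ}
    (hf : DifferentiableAt ℝ f (y t₀)) (hy : DifferentiableAt ℝ y t₀) :
    DifferentiableAt ℝ (fun t => (y t, t • f (y t))) t₀ :=
  hy.prodMk (differentiableAt_id.smul (hf.comp t₀ hy))

end Calculus

lemma exists_implicit_of_eventually_apply_eq {𝕜 P E : Type*} [NontriviallyNormedField 𝕜]
    [NormedAddCommGroup P] [NormedSpace 𝕜 P] [CompleteSpace P]
    [NormedAddCommGroup E] [NormedSpace 𝕜 E] [CompleteSpace E]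
    {G : P × E → E} {G' : P × E →L[𝕜] E} {p₀ : P} {x₀ : E}
    (hG : HasStrictFDerivAt G G' (p₀, x₀)) (hid : ∀ᶠ y in 𝓝 x₀, G (p₀, y) = y) :
    ∃ y : P → E, y p₀ = x₀ ∧ DifferentiableAt 𝕜 y p₀ ∧ ∀ᶠ p in 𝓝 p₀, G (p, y p) = x₀ := by
  have hpartial : G' ∘L .inr 𝕜 P E = .id 𝕜 E :=
    (hG.hasFDerivAt.comp x₀ (hasFDerivAt_prodMk_right p₀ x₀)).unique
      ((hasFDerivAt_id x₀).congr_of_eventuallyEq hid)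
  have hinv : (G' ∘L .inr 𝕜 P E).IsInvertible := hpartial ▸ ⟨.refl 𝕜 E, rfl⟩
  refine ⟨hG.implicitFunctionOfProdDomain hinv, ?_, ?_, ?_⟩
  · exact (hG.eventually_apply_eq_iff_implicitFunctionOfProdDomain hinv).self_of_nhds.1 rfl
  · exact (hG.hasStrictFDerivAt_implicitFunctionOfProdDomain hinv).hasFDerivAt.differentiableAt
  · simpa [hid.self_of_nhds] using hG.eventually_apply_implicitFunctionOfProdDomain hinv

/-- The germ at `(x₀, 0)` of a `C²` discretization map on a normed space, which is what first-order
accuracy of the scheme started at `x₀` depends on. Condition (i) is required for base points near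
`x₀`, condition (ii) only at `x₀` itself. -/
structure IsDiscretizationMapAt {E : Type*} [NormedAddCommGroup E] [NormedSpace ℝ E]
    (R : E × E → E × E) (x₀ : E) : Prop where
  contDiffAt : ContDiffAt ℝ 2 R (x₀, 0)
  apply_zero : ∀ᶠ y in 𝓝 x₀, R (y, 0) = (y, y)
  fderiv_snd_sub_fderiv_fst :
    fderiv ℝ (fun v => (R (x₀, v)).2) 0 - fderiv ℝ (fun v => (R (x₀, v)).1) 0 =
      ContinuousLinearMap.id ℝ E

lemma IsC2DiscretizationMap.isDiscretizationMapAt {n : ℕ} {U : Set (Fin n → ℝ)}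
    {O : Set ((Fin n → ℝ) × (Fin n → ℝ))}
    {Rd : ((Fin n → ℝ) × (Fin n → ℝ)) → ((Fin n → ℝ) × (Fin n → ℝ))} {x₀ : Fin n → ℝ}
    (hRd : IsC2DiscretizationMap U O Rd) (hU : U ∈ 𝓝 x₀) : IsDiscretizationMapAt Rd x₀ := by
  obtain ⟨hO, -, hzero, hsmooth, -, hdiag, hfderiv⟩ := hRd
  have hx₀ : x₀ ∈ U := mem_of_mem_nhds hU
  exact ⟨hsmooth.contDiffAt (hO.mem_nhds (hzero x₀ hx₀)), mem_of_superset hU hdiag,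
    hfderiv x₀ hx₀⟩

namespace IsDiscretizationMapAt

variable {E : Type*} [NormedAddCommGroup E] [NormedSpace ℝ E] {R : E × E → E × E} {x₀ : E}
  {f : E → E} {f' : E →L[ℝ] E}

lemma fderiv_snd_sub_fst_apply_inr (hR : IsDiscretizationMapAt R x₀) (w : E) :
    fderiv ℝ (fun p => (R p).2 - (R p).1) (x₀, 0) (0, w) = w := by
  have hdiff : DifferentiableAt ℝ R (x₀, 0) := hR.contDiffAt.differentiableAt two_ne_zero
  have hinr : HasFDerivAt (fun v : E => (x₀, v)) (.inr ℝ E E) 0 := hasFDerivAt_prodMk_right x₀ 0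
  have hsnd : fderiv ℝ (fun v => (R (x₀, v)).2) 0 = _ := (hdiff.snd.hasFDerivAt.comp 0 hinr).fderiv
  have hfst : fderiv ℝ (fun v => (R (x₀, v)).1) 0 = _ := (hdiff.fst.hasFDerivAt.comp 0 hinr).fderiv
  have hid := DFunLike.congr_fun hR.fderiv_snd_sub_fderiv_fst w
  rw [hsnd, hfst] at hid
  rw [fderiv_fun_sub hdiff.snd hdiff.fst]
  simpa using hid

lemma isBigO_snd_sub_fst_sub (hR : IsDiscretizationMapAt R x₀) :
    (fun p => (R p).2 - (R p).1 - p.2) =O[𝓝 (x₀, 0)] fun p => ‖p - (x₀, 0)‖ * ‖p.2‖ := by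
  have hexpand := isBigO_sub_sub_fderiv_inr_of_contDiffAt_two
    (hR.contDiffAt.snd.sub hR.contDiffAt.fst)
  have hzero : ∀ᶠ p : E × E in 𝓝 (x₀, 0), R (p.1, 0) = (p.1, p.1) :=
    (continuous_fst.tendsto (x₀, (0 : E))).eventually hR.apply_zero
  refine hexpand.congr' ?_ (by simp)
  filter_upwards [hzero] with p hp
  simp [hp, hR.fderiv_snd_sub_fst_apply_inr]

lemma exists_basePoint [CompleteSpace E] (hR : IsDiscretizationMapAt R x₀)
    (hf : HasStrictFDerivAt f f' x₀) :
    ∃ y : ℝ → E, y 0 = x₀ ∧ DifferentiableAt ℝ y 0 ∧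
      ∀ᶠ h in 𝓝 0, (R (y h, h • f (y h))).1 = x₀ := by
  have hstep := hasStrictFDerivAt_snd.prodMk
    ((hasStrictFDerivAt_fst (𝕜 := ℝ) (p := ((0 : ℝ), x₀))).smul
      (hf.comp ((0 : ℝ), x₀) hasStrictFDerivAt_snd))
  have hR' : HasStrictFDerivAt R (fderiv ℝ R (x₀, 0)) (x₀, (0 : ℝ) • f x₀) := by
    simpa using hR.contDiffAt.hasStrictFDerivAt two_ne_zero
  refine exists_implicit_of_eventually_apply_eq (hR'.comp ((0 : ℝ), x₀) hstep).fst ?_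
  filter_upwards [hR.apply_zero] with y hy
  simp [hy]

lemma isBigO_snd_sub_sub_smul (hR : IsDiscretizationMapAt R x₀) (hf : DifferentiableAt ℝ f x₀)
    {y : ℝ → E} (hy0 : y 0 = x₀) (hy : DifferentiableAt ℝ y 0)
    (hbase : ∀ᶠ h in 𝓝 0, (R (y h, h • f (y h))).1 = x₀) :
    (fun h => (R (y h, h • f (y h))).2 - x₀ - h • f x₀) =O[𝓝 0] fun h : ℝ => h ^ 2 := by
  subst hy0
  have hfy : DifferentiableAt ℝ (fun h => f (y h)) 0 := hf.comp 0 hy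
  have hcurve := differentiableAt_prodMk_smul_comp hf hy
  have hfibre_isBigO : (fun h => h • f (y h)) =O[𝓝 0] fun h : ℝ => h := by
    simpa using hcurve.snd.isBigO_sub
  have hcurve_tendsto : Tendsto (fun h => (y h, h • f (y h))) (𝓝 0) (𝓝 (y 0, 0)) := by
    simpa using hcurve.continuousAt.tendsto
  have hcurve_isBigO : (fun h => (y h, h • f (y h)) - (y 0, 0)) =O[𝓝 0] fun h : ℝ => h := by
    simpa using hcurve.isBigO_sub
  have hincrement : (fun h => (R (y h, h • f (y h))).2 - (R (y h, h • f (y h))).1 - h • f (y h))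
      =O[𝓝 0] fun h : ℝ => h * h :=
    (hR.isBigO_snd_sub_fst_sub.comp_tendsto hcurve_tendsto).trans
      (hcurve_isBigO.norm_left.mul hfibre_isBigO.norm_left)
  have hfield : (fun h => h • (f (y h) - f (y 0))) =O[𝓝 0] fun h : ℝ => h * h := by
    simpa using (isBigO_refl (fun h : ℝ => h) (𝓝 0)).smul hfy.isBigO_sub
  refine (hincrement.add hfield).congr' ?_ (.of_forall fun h => (pow_two h).symm)
  filter_upwards [hbase] with h hh
  rw [hh, smul_sub]
  abel

end IsDiscretizationMapAt

theorem discretization_scheme_first_order_general {E : Type*} [NormedAddCommGroup E]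
    [NormedSpace ℝ E] [CompleteSpace E] {R : E × E → E × E} {x₀ : E} {U : Set E} {O : Set (E × E)}
    {f : E → E} {f' : E →L[ℝ] E} {x : ℝ → E} {ε : ℝ}
    (hR : IsDiscretizationMapAt R x₀) (hU : U ∈ 𝓝 x₀) (hO : O ∈ 𝓝 (x₀, 0))
    (hf : HasStrictFDerivAt f f' x₀) (hε : 0 < ε) (hx0 : x 0 = x₀)
    (hsol : ∀ t ∈ Set.Ioo (-ε) ε, HasDerivAt x (f (x t)) t) :
    ∃ K > (0 : ℝ), ∃ h₀ > (0 : ℝ), h₀ ≤ ε ∧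
      ∀ h : ℝ, 0 < h → h < h₀ →
        ∃ x₁ : E, (∃ y ∈ U, (y, h • f y) ∈ O ∧ R (y, h • f y) = (x₀, x₁)) ∧
          ‖x h - x₁‖ ≤ K * h ^ 2 := by
  obtain ⟨y, hy0, hy, hbase⟩ := hR.exists_basePoint hf
  have hfd : DifferentiableAt ℝ f x₀ := hf.hasFDerivAt.differentiableAt
  have hsolution : (fun h => x h - x₀ - h • f x₀) =O[𝓝 0] fun h : ℝ => h ^ 2 := by
    simpa [hx0] using isBigO_sub_sub_smul_of_hasDerivAt (hx0 ▸ hfd)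
      (mem_of_superset (Ioo_mem_nhds (neg_lt_zero.2 hε) hε) hsol)
  have herror : (fun h => x h - (R (y h, h • f (y h))).2) =O[𝓝 0] fun h : ℝ => h ^ 2 := by
    simpa using hsolution.sub (hR.isBigO_snd_sub_sub_smul hfd hy0 hy hbase)
  have hyU : ∀ᶠ h in 𝓝 0, y h ∈ U := hy.continuousAt.eventually (hy0 ▸ hU)
  have hcurveO : ∀ᶠ h in 𝓝 0, (y h, h • f (y h)) ∈ O :=
    (differentiableAt_prodMk_smul_comp (hy0 ▸ hfd) hy).continuousAt.eventually
      (by simpa [hy0] using hO)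
  obtain ⟨K, hK, herror⟩ := herror.exists_pos
  obtain ⟨r, hr, hball⟩ := Metric.eventually_nhds_iff_ball.1
    (herror.bound.and (hbase.and (hyU.and hcurveO)))
  refine ⟨K, hK, min r ε, lt_min hr hε, min_le_right r ε, fun h hpos hlt => ?_⟩
  obtain ⟨hle, hfst, hmemU, hmemO⟩ := hball h <| by
    simpa [abs_of_pos hpos] using hlt.trans_le (min_le_left r ε)
  exact ⟨(R (y h, h • f (y h))).2, ⟨y h, hmemU, hmemO, Prod.ext hfst rfl⟩, by simpa using hle⟩

/-- The discretization scheme induced by a `C²` discretization map `Rd` (which is a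
diffeomorphism from its domain `O` onto an open neighborhood `W` of the diagonal of `U × U`,
with inverse `S`) is first-order accurate: if `t ↦ x t` solves `ẋ = F(x, u)`, `x 0 = x₀`, then
there are `K > 0` and `h₀ > 0` such that for every step size `0 < h < h₀` there is an output
`x₁` of the scheme at `x₀` (i.e. `Rd (y, h • F (y, u)) = (x₀, x₁)` for some base point `y`)
with `‖x h − x₁‖ ≤ K h²`. -/
theorem discretization_scheme_first_order {n m : ℕ}
    (U : Set (Fin n → ℝ)) (hU : IsOpen U)
    (O W : Set ((Fin n → ℝ) × (Fin n → ℝ)))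
    (Rd S : ((Fin n → ℝ) × (Fin n → ℝ)) → ((Fin n → ℝ) × (Fin n → ℝ)))
    (hRd : IsC2DiscretizationMap U O Rd)
    -- `Rd` is a diffeomorphism from `O` onto the open neighborhood `W` of the diagonal:
    (hW : IsOpen W) (hdiag : ∀ x ∈ U, ((x, x)) ∈ W)
    (himage : Rd '' O = W)
    (hSsmooth : ContDiffOn ℝ 2 S W)
    (hSR : ∀ p ∈ O, S (Rd p) = p)
    (hRS : ∀ q ∈ W, Rd (S q) = q)
    -- the controlled dynamics
    (F : ((Fin n → ℝ) × (Fin m → ℝ)) → (Fin n → ℝ))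
    (hF : ContDiff ℝ 1 F)
    (u : Fin m → ℝ) (x₀ : Fin n → ℝ) (hx₀ : x₀ ∈ U)
    -- the exact solution of `ẋ = F(x,u)`, `x 0 = x₀`, defined on `(-ε, ε)`
    (ε : ℝ) (hε : 0 < ε) (x : ℝ → (Fin n → ℝ)) (hx0 : x 0 = x₀)
    (hsol : ∀ t ∈ Set.Ioo (-ε) ε, x t ∈ U ∧ HasDerivAt x (F (x t, u)) t) :
    ∃ K > (0 : ℝ), ∃ h₀ > (0 : ℝ), h₀ ≤ ε ∧
      ∀ h : ℝ, 0 < h → h < h₀ →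
        ∃ x₁ : Fin n → ℝ,
          (∃ y ∈ U, (y, h • F (y, u)) ∈ O ∧ Rd (y, h • F (y, u)) = (x₀, x₁)) ∧
          ‖x h - x₁‖ ≤ K * h ^ 2 := by
  exact discretization_scheme_first_order_general (hRd.isDiscretizationMapAt (hU.mem_nhds hx₀))
    (hU.mem_nhds hx₀) (hRd.1.mem_nhds (hRd.2.2.1 x₀ hx₀))
    ((hF.comp (contDiff_prodMk_left u)).contDiffAt.hasStrictFDerivAt one_ne_zero) hε hx0
    fun t ht => (hsol t ht).2
end

section
/- Let ξ = (x₁, x₂, x₃, x₄, w) ∈ ℝ⁵ with 1 + x₃ − w·x₄ ≠ 0, and let v = (v₁, v₂) ∈ ℝ². Define F(ξ) = (x₂ + 2x₂(x₃ + x₄w), x₃ + x₄w, 0, (1 + x₃)w, 0), G₁ = (0,0,1,0,0), G₂ = (0,0,0,0,1), Φ(ξ) = (x₁ − x₂², x₂, x₃ + x₄w, x₄, (1 + x₃)w), and let μ = (μ₁, μ₂) be determined by the invertible linear system [[1, x₄],[w, 1 + x₃]]·μ = (v₁ − (1 + x₃)w², v₂). Then DΦ(ξ)·(F(ξ) + μ₁G₁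 + μ₂G₂) = A·Φ(ξ) + B·v, where A ∈ ℝ^{5×5} and B ∈ ℝ^{5×2} are the matrices of the linear system ż₁ = z₂, ż₂ = z₃, ż₃ = v₁, ż₄ = z₅, ż₅ = v₂ (i.e., A has ones in entries (1,2), (2,3), (4,5) and zeros elsewhere, and B has ones in entries (3,1), (5,2) and zeros elsewhere). -/
/-!
The functions `z₁ = x₁ - x₂²` and `z₄ = x₄` are flat outputs. Along the extended system, `-2x₂ẋ₂`
cancels the nonlinear part of `ẋ₁`, so that `ż₁ = x₂` and `z̈₁ = x₃ + x₄w` do not involve the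
inputs, and neither does `ż₄ = (1 + x₃)w`. The inputs enter one derivative later, affinely and
through the matrix `[[1, x₄], [w, 1 + x₃]]`, and the feedback solves this affine relation for
them.
-/

open Matrix

section Definitions

variable {R : Type*}

/-- The right-hand side `F(ξ) + μ₁G₁ + μ₂G₂` of the dynamic extension, where the state
`ξ = (x₁, x₂, x₃, x₄, w)` is indexed from `0`, so that `w = ξ 4`. -/
def extendedField [Semiring R] (ξ : Fin 5 → R) (μ : Fin 2 → R) : Fin 5 → R :=
  ![ξ 1 + 2 * ξ 1 * (ξ 2 + ξ 3 * ξ 4), ξ 2 + ξ 3 * ξ 4, 0, (1 + ξ 2) * ξ 4, 0] +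
    μ 0 • ![0, 0, 1, 0, 0] + μ 1 • ![0, 0, 0, 0, 1]

/-- The coordinate change `Φ`, made of the flat outputs and their derivatives that do not involve
the inputs: `(z₁, ż₁, z̈₁, z₄, ż₄)`. -/
def linearizingMap [Ring R] (ξ : Fin 5 → R) : Fin 5 → R :=
  ![ξ 0 - ξ 1 ^ 2, ξ 1, ξ 2 + ξ 3 * ξ 4, ξ 3, (1 + ξ 2) * ξ 4]

/-- The decoupling matrix: the coefficients of the inputs in the highest derivatives
`(z₁⁽³⁾, z̈₄)` of the flat outputs. -/
def decouplingMatrix [Semiring R] (ξ : Fin 5 → R) : Matrix (Fin 2) (Fin 2) R :=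
  !![1, ξ 3; ξ 4, 1 + ξ 2]

/-- The input-free part of the highest derivatives `(z₁⁽³⁾, z̈₄)` of the flat outputs. -/
def decouplingDrift [Semiring R] (ξ : Fin 5 → R) : Fin 2 → R :=
  ![(1 + ξ 2) * ξ 4 ^ 2, 0]

variable (R)

/-- The state matrix `A` of the Brunovský system made of integrator chains of lengths 3 and 2. -/
def brunovskyStateMatrix [Zero R] [One R] : Matrix (Fin 5) (Fin 5) R :=
  !![0, 1, 0, 0, 0; 0, 0, 1, 0, 0; 0, 0, 0, 0, 0; 0, 0, 0, 0, 1; 0, 0, 0, 0, 0]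

/-- The input matrix `B` of the Brunovský system made of integrator chains of lengths 3 and 2. -/
def brunovskyInputMatrix [Zero R] [One R] : Matrix (Fin 5) (Fin 2) R :=
  !![0, 0; 0, 0; 1, 0; 0, 0; 0, 1]

end Definitions

section Algebra

variable {R : Type*}

theorem extendedField_eq [Semiring R] (ξ : Fin 5 → R) (μ : Fin 2 → R) :
    extendedField ξ μ =
      ![ξ 1 + 2 * ξ 1 * (ξ 2 + ξ 3 * ξ 4), ξ 2 + ξ 3 * ξ 4, μ 0, (1 + ξ 2) * ξ 4, μ 1] := by
  simp [extendedField]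

theorem decouplingMatrix_mulVec [Semiring R] (ξ : Fin 5 → R) (μ : Fin 2 → R) :
    decouplingMatrix ξ *ᵥ μ = ![μ 0 + ξ 3 * μ 1, ξ 4 * μ 0 + (1 + ξ 2) * μ 1] := by
  ext i
  fin_cases i <;> simp [decouplingMatrix, mulVec, dotProduct]

theorem decouplingMatrix_mulVec_eq_sub_iff [Ring R] {ξ : Fin 5 → R} {μ v : Fin 2 → R} :
    decouplingMatrix ξ *ᵥ μ = v - decouplingDrift ξ ↔
      μ 0 + ξ 3 * μ 1 = v 0 - (1 + ξ 2) * ξ 4 ^ 2 ∧ ξ 4 * μ 0 + (1 + ξ 2) * μ 1 = v 1 := by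
  rw [decouplingMatrix_mulVec, funext_iff, Fin.forall_fin_two]
  simp [decouplingDrift]

theorem brunovsky_mulVec_add_mulVec [Semiring R] (z : Fin 5 → R) (v : Fin 2 → R) :
    brunovskyStateMatrix R *ᵥ z + brunovskyInputMatrix R *ᵥ v = ![z 1, z 2, v 0, z 4, v 1] := by
  ext i
  fin_cases i <;>
    simp [brunovskyStateMatrix, brunovskyInputMatrix, dotProduct, Fin.sum_univ_succ]

end Algebra

section Derivative

variable {𝕜 : Type*} [NontriviallyNormedField 𝕜]

theorem hasFDerivAt_linearizingMap (ξ : Fin 5 → 𝕜) :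
    let dξ (i : Fin 5) : (Fin 5 → 𝕜) →L[𝕜] 𝕜 := .proj i
    HasFDerivAt linearizingMap
      (.pi ![dξ 0 - (2 * ξ 1) • dξ 1, dξ 1, dξ 2 + (ξ 3 • dξ 4 + ξ 4 • dξ 3), dξ 3,
        (1 + ξ 2) • dξ 4 + ξ 4 • dξ 2]) ξ := by
  intro dξ
  have hcoord (i : Fin 5) : HasFDerivAt (fun p : Fin 5 → 𝕜 ↦ p i) (dξ i) ξ :=
    hasFDerivAt_apply i ξ
  have hsq : HasFDerivAt (fun p : Fin 5 → 𝕜 ↦ p 1 ^ 2) ((2 * ξ 1) • dξ 1) ξ := by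
    simpa using (hcoord 1).pow 2
  refine hasFDerivAt_pi.2 fun i ↦ ?_
  fin_cases i
  · exact (hcoord 0).sub hsq
  · exact hcoord 1
  · exact (hcoord 2).add ((hcoord 3).mul (hcoord 4))
  · exact hcoord 3
  · exact ((hcoord 2).const_add 1).mul (hcoord 4)

theorem fderiv_linearizingMap_apply (ξ u : Fin 5 → 𝕜) :
    fderiv 𝕜 linearizingMap ξ u =
      ![u 0 - 2 * ξ 1 * u 1, u 1, u 2 + (ξ 3 * u 4 + ξ 4 * u 3), u 3,
        (1 + ξ 2) * u 4 + ξ 4 * u 2] := by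
  rw [(hasFDerivAt_linearizingMap ξ).fderiv]
  ext i
  fin_cases i <;> simp

theorem fderiv_linearizingMap_extendedField (ξ : Fin 5 → 𝕜) (μ : Fin 2 → 𝕜) :
    fderiv 𝕜 linearizingMap ξ (extendedField ξ μ) =
      brunovskyStateMatrix 𝕜 *ᵥ linearizingMap ξ +
        brunovskyInputMatrix 𝕜 *ᵥ (decouplingMatrix ξ *ᵥ μ + decouplingDrift ξ) := by
  rw [fderiv_linearizingMap_apply, extendedField_eq, brunovsky_mulVec_add_mulVec,
    decouplingMatrix_mulVec]
  ext i
  fin_cases i <;> simp [linearizingMap, decouplingDrift] <;> ring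

end Derivative

theorem linearizing_identity_general {𝕜 : Type*} [NontriviallyNormedField 𝕜]
    {ξ : Fin 5 → 𝕜} {v μ : Fin 2 → 𝕜} (hμ : decouplingMatrix ξ *ᵥ μ = v - decouplingDrift ξ) :
    fderiv 𝕜 linearizingMap ξ (extendedField ξ μ) =
      brunovskyStateMatrix 𝕜 *ᵥ linearizingMap ξ + brunovskyInputMatrix 𝕜 *ᵥ v := by
  rw [fderiv_linearizingMap_extendedField, hμ, sub_add_cancel]

/-- The coordinate change `Φ` together with the feedback `μ = β(ξ)⁻¹·(v₁ − (1+x₃)w², v₂)`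
transforms the extended system `ξ̇ = F(ξ) + μ₁G₁ + μ₂G₂` into the Brunovský form
`ż = Az + Bv`: pointwise, `DΦ(ξ)·(F(ξ) + μ₁G₁ + μ₂G₂) = A·Φ(ξ) + B·v`. -/
theorem linearizing_identity
    (F : (Fin 5 → ℝ) → (Fin 5 → ℝ)) (G₁ G₂ : Fin 5 → ℝ)
    (Φ : (Fin 5 → ℝ) → (Fin 5 → ℝ))
    (A : Matrix (Fin 5) (Fin 5) ℝ) (B : Matrix (Fin 5) (Fin 2) ℝ)
    (hF : F = fun p => ![p 1 + 2 * p 1 * (p 2 + p 3 * p 4), p 2 + p 3 * p 4, 0,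
      (1 + p 2) * p 4, 0])
    (hG₁ : G₁ = ![0, 0, 1, 0, 0]) (hG₂ : G₂ = ![0, 0, 0, 0, 1])
    (hΦ : Φ = fun p => ![p 0 - (p 1) ^ 2, p 1, p 2 + p 3 * p 4, p 3, (1 + p 2) * p 4])
    (hA : A = !![0, 1, 0, 0, 0; 0, 0, 1, 0, 0; 0, 0, 0, 0, 0; 0, 0, 0, 0, 1; 0, 0, 0, 0, 0])
    (hB : B = !![0, 0; 0, 0; 1, 0; 0, 0; 0, 1])
    (ξ : Fin 5 → ℝ) (hreg : 1 + ξ 2 - ξ 4 * ξ 3 ≠ 0)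
    (v : Fin 2 → ℝ) (μ : Fin 2 → ℝ)
    (hμ1 : μ 0 + ξ 3 * μ 1 = v 0 - (1 + ξ 2) * (ξ 4) ^ 2)
    (hμ2 : ξ 4 * μ 0 + (1 + ξ 2) * μ 1 = v 1) :
    fderiv ℝ Φ ξ (F ξ + μ 0 • G₁ + μ 1 • G₂) = A *ᵥ Φ ξ + B *ᵥ v := by
  subst hF hG₁ hG₂ hΦ hA hB
  exact linearizing_identity_general (decouplingMatrix_mulVec_eq_sub_iff.2 ⟨hμ1, hμ2⟩)
end

section
/- Let h > 0 and let ξ_k = (x₁, x₂, x₃, x₄, w) ∈ ℝ⁵ be a point where Φ(ξ) := (x₁ − x₂², x₂, x₃ + x₄w, x₄, (1 + x₃)w) is a local diffeomorphism (i.e., 1 + x₃ − w·x₄ ≠ 0). Let v_k = (v₁, v₂) ∈ ℝ², let μ_k solve [[1, x₄],[w, 1 + x₃]]·μ_k = (v₁ − (1 + x₃)w², v₂), and suppose ξ_{k+1} ∈ ℝ⁵ satisfies Φ(ξ_{k+1}) = Φ(ξ_k) + h·DΦ(ξ_k)·(F(ξ_k) + μ_k¹G₁ + μ_k²G₂), where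 F(ξ) = (x₂ + 2x₂(x₃ + x₄w), x₃ + x₄w, 0, (1 + x₃)w, 0), G₁ = (0,0,1,0,0), G₂ = (0,0,0,0,1). Then, writing z_k := Φ(ξ_k) and z_{k+1} := Φ(ξ_{k+1}), one has z_{k+1} = (I + hA)·z_k + hB·v_k, where A ∈ ℝ^{5×5} has ones in entries (1,2), (2,3), (4,5) and zeros elsewhere and B ∈ ℝ^{5×2} has ones in entries (3,1), (5,2) and zeros elsewhere; i.e., componentwise z_{k+1}¹ = z_k¹ + h z_k², z_{k+1}² = z_k² + h z_k³, z_{k+1}³ = z_k³ + h v₁, z_{k+1}⁴ = z_k⁴ + h z_k⁵, z_{k+1}⁵ = z_k⁵ + h v₂. -/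
open Matrix

/-! The term `2x₂(x₃ + x₄w)` of the drift cancels the derivative of `-x₂²`, while the feedback
equations make `v₁` and `v₂` the derivatives of `z₃ = x₃ + x₄w` and `z₅ = (1 + x₃)w`. Hence
`DΦ(ξ)(F + μ₁G₁ + μ₂G₂) = (z₂, z₃, v₁, z₅, v₂) = Az + Bv`. The scheme is the explicit Euler method
in the coordinates `z`, and an Euler step of `ż = Az + Bv` is `z ↦ (I + hA)z + hBv`. -/

section LinearUpdate

theorem one_add_smul_mulVec_add_smul_mulVec {R m n : Type*} [Semiring R] [Fintype m]
    [DecidableEq m] [Fintype n] (h : R) (A : Matrix m m R) (B : Matrix m n R)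
    (z : m → R) (v : n → R) :
    (1 + h • A) *ᵥ z + (h • B) *ᵥ v = z + h • (A *ᵥ z + B *ᵥ v) := by
  rw [add_mulVec, one_mulVec, smul_mulVec, smul_mulVec, smul_add, add_assoc]

/-- The matrix `A` of the Brunovský canonical form `ż = Az + Bv` with two chains of integrators,
of lengths three and two. -/
def brunovskyA (R : Type*) [Zero R] [One R] : Matrix (Fin 5) (Fin 5) R :=
  !![0, 1, 0, 0, 0; 0, 0, 1, 0, 0; 0, 0, 0, 0, 0; 0, 0, 0, 0, 1; 0, 0, 0, 0, 0]

/-- The input matrix `B` of the Brunovský canonical form `ż = Az + Bv` with two chains of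
integrators, of lengths three and two. -/
def brunovskyB (R : Type*) [Zero R] [One R] : Matrix (Fin 5) (Fin 2) R :=
  !![0, 0; 0, 0; 1, 0; 0, 0; 0, 1]

variable {R : Type*} [Semiring R]

theorem brunovskyA_mulVec_add_brunovskyB_mulVec (z : Fin 5 → R) (v : Fin 2 → R) :
    brunovskyA R *ᵥ z + brunovskyB R *ᵥ v = ![z 1, z 2, v 0, z 4, v 1] := by
  ext i
  fin_cases i <;> simp [brunovskyA, brunovskyB, dotProduct, Fin.sum_univ_five]

theorem eq_brunovsky_update_iff {h : R} {z z' : Fin 5 → R} {v : Fin 2 → R} :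
    z' = (1 + h • brunovskyA R) *ᵥ z + (h • brunovskyB R) *ᵥ v ↔
      z' 0 = z 0 + h * z 1 ∧ z' 1 = z 1 + h * z 2 ∧ z' 2 = z 2 + h * v 0 ∧
        z' 3 = z 3 + h * z 4 ∧ z' 4 = z 4 + h * v 1 := by
  rw [one_add_smul_mulVec_add_smul_mulVec, brunovskyA_mulVec_add_brunovskyB_mulVec]
  simp [funext_iff, Fin.forall_fin_succ, vecHead, vecTail]

end LinearUpdate

section ExtendedSystem

variable {𝕜 : Type*} [NontriviallyNormedField 𝕜]

/-- The right-hand side `F(ξ) + μ₁G₁ + μ₂G₂` of the dynamically extended system at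
`ξ = (x₁, x₂, x₃, x₄, w)`; in the code coordinates are indexed from zero. -/
def extendedVectorField (ξ : Fin 5 → 𝕜) (μ : Fin 2 → 𝕜) : Fin 5 → 𝕜 :=
  ![ξ 1 + 2 * ξ 1 * (ξ 2 + ξ 3 * ξ 4), ξ 2 + ξ 3 * ξ 4, 0, (1 + ξ 2) * ξ 4, 0] +
    μ 0 • ![0, 0, 1, 0, 0] + μ 1 • ![0, 0, 0, 0, 1]

/-- The linearizing coordinates `Φ(ξ) = (x₁ - x₂², x₂, x₃ + x₄w, x₄, (1 + x₃)w)` of the dynamically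
extended system. -/
def linearizingCoords (ξ : Fin 5 → 𝕜) : Fin 5 → 𝕜 :=
  ![ξ 0 - ξ 1 ^ 2, ξ 1, ξ 2 + ξ 3 * ξ 4, ξ 3, (1 + ξ 2) * ξ 4]

theorem hasFDerivAt_linearizingCoords (ξ : Fin 5 → 𝕜) :
    let dξ (i : Fin 5) : (Fin 5 → 𝕜) →L[𝕜] 𝕜 := .proj i
    HasFDerivAt linearizingCoords
      (.pi ![dξ 0 - (2 * ξ 1) • dξ 1, dξ 1, dξ 2 + (ξ 3 • dξ 4 + ξ 4 • dξ 3), dξ 3,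
        (1 + ξ 2) • dξ 4 + ξ 4 • dξ 2]) ξ := by
  intro dξ
  have coord (i : Fin 5) : HasFDerivAt (fun p : Fin 5 → 𝕜 ↦ p i) (dξ i) ξ :=
    hasFDerivAt_apply i ξ
  refine hasFDerivAt_pi.2 fun i ↦ ?_
  fin_cases i
  · simpa [linearizingCoords] using (coord 0).fun_sub ((coord 1).pow 2)
  · exact coord 1
  · exact (coord 2).add ((coord 3).mul (coord 4))
  · exact coord 3
  · exact ((coord 2).const_add 1).mul (coord 4)

theorem fderiv_linearizingCoords_extendedVectorField {ξ : Fin 5 → 𝕜} {v μ : Fin 2 → 𝕜}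
    (hμ₁ : μ 0 + ξ 3 * μ 1 = v 0 - (1 + ξ 2) * ξ 4 ^ 2)
    (hμ₂ : ξ 4 * μ 0 + (1 + ξ 2) * μ 1 = v 1) :
    fderiv 𝕜 linearizingCoords ξ (extendedVectorField ξ μ) =
      brunovskyA 𝕜 *ᵥ linearizingCoords ξ + brunovskyB 𝕜 *ᵥ v := by
  have deriv_z₃ : μ 0 + (ξ 3 * μ 1 + ξ 4 * ((1 + ξ 2) * ξ 4)) = v 0 := by
    linear_combination hμ₁
  have deriv_z₅ : (1 + ξ 2) * μ 1 + ξ 4 * μ 0 = v 1 := by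
    linear_combination hμ₂
  rw [(hasFDerivAt_linearizingCoords ξ).fderiv, brunovskyA_mulVec_add_brunovskyB_mulVec]
  ext i
  fin_cases i <;> simp [extendedVectorField, linearizingCoords, deriv_z₃, deriv_z₅]

theorem discrete_step_linearizes_general {h : 𝕜} {ξ ξ' : Fin 5 → 𝕜} {v μ : Fin 2 → 𝕜}
    (hμ₁ : μ 0 + ξ 3 * μ 1 = v 0 - (1 + ξ 2) * ξ 4 ^ 2)
    (hμ₂ : ξ 4 * μ 0 + (1 + ξ 2) * μ 1 = v 1)
    (hstep : linearizingCoords ξ' =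
      linearizingCoords ξ + h • fderiv 𝕜 linearizingCoords ξ (extendedVectorField ξ μ)) :
    linearizingCoords ξ' =
      (1 + h • brunovskyA 𝕜) *ᵥ linearizingCoords ξ + (h • brunovskyB 𝕜) *ᵥ v := by
  rw [hstep, fderiv_linearizingCoords_extendedVectorField hμ₁ hμ₂,
    one_add_smul_mulVec_add_smul_mulVec]

end ExtendedSystem

/-- One step of the lifted discretization scheme
`Φ(ξ_{k+1}) = Φ(ξ_k) + h·DΦ(ξ_k)·(F(ξ_k) + μ¹G₁ + μ²G₂)` together with the linearizing
feedback `[[1,x₄],[w,1+x₃]]·μ = (v₁ − (1+x₃)w², v₂)` yields, in the coordinates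
`z = Φ(ξ)`, the linear discrete-time update `z_{k+1} = (I + hA)z_k + hB v_k`. -/
theorem discrete_step_linearizes
    (h : ℝ) (hh : 0 < h)
    (F : (Fin 5 → ℝ) → (Fin 5 → ℝ)) (G₁ G₂ : Fin 5 → ℝ)
    (Φ : (Fin 5 → ℝ) → (Fin 5 → ℝ))
    (A : Matrix (Fin 5) (Fin 5) ℝ) (B : Matrix (Fin 5) (Fin 2) ℝ)
    (hF : F = fun p => ![p 1 + 2 * p 1 * (p 2 + p 3 * p 4), p 2 + p 3 * p 4, 0,
      (1 + p 2) * p 4, 0])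
    (hG₁ : G₁ = ![0, 0, 1, 0, 0]) (hG₂ : G₂ = ![0, 0, 0, 0, 1])
    (hΦ : Φ = fun p => ![p 0 - (p 1) ^ 2, p 1, p 2 + p 3 * p 4, p 3, (1 + p 2) * p 4])
    (hA : A = !![0, 1, 0, 0, 0; 0, 0, 1, 0, 0; 0, 0, 0, 0, 0; 0, 0, 0, 0, 1; 0, 0, 0, 0, 0])
    (hB : B = !![0, 0; 0, 0; 1, 0; 0, 0; 0, 1])
    (ξk ξk1 : Fin 5 → ℝ) (hreg : 1 + ξk 2 - ξk 4 * ξk 3 ≠ 0)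
    (v μ : Fin 2 → ℝ)
    (hμ1 : μ 0 + ξk 3 * μ 1 = v 0 - (1 + ξk 2) * (ξk 4) ^ 2)
    (hμ2 : ξk 4 * μ 0 + (1 + ξk 2) * μ 1 = v 1)
    (hstep : Φ ξk1 = Φ ξk + h • (fderiv ℝ Φ ξk (F ξk + μ 0 • G₁ + μ 1 • G₂))) :
    Φ ξk1 = ((1 : Matrix (Fin 5) (Fin 5) ℝ) + h • A) *ᵥ Φ ξk + (h • B) *ᵥ v ∧
    (Φ ξk1 0 = Φ ξk 0 + h * Φ ξk 1 ∧
     Φ ξk1 1 = Φ ξk 1 + h * Φ ξk 2 ∧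
     Φ ξk1 2 = Φ ξk 2 + h * v 0 ∧
     Φ ξk1 3 = Φ ξk 3 + h * Φ ξk 4 ∧
     Φ ξk1 4 = Φ ξk 4 + h * v 1) := by
  subst hF hG₁ hG₂ hΦ hA hB
  have update := discrete_step_linearizes_general hμ1 hμ2 hstep
  exact ⟨update, eq_brunovsky_update_iff.1 update⟩
end
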